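/- Let C be a regular Ord-category and D ↣ X×Y an ideal. Then D satisfies the Ord-difunctionality condition (for all x,u,u': A→X and y,y',v: A→Y with (x,y) ∈_A D, y ≼ y', (u,y') ∈_A D, u ≼ u', (u',v) ∈_A D, one has (x,v) ∈_A D) if and only if D ≅ D∘D^*∘D, equivalently D ≅ D∘D°∘D. -/

import Mathlib

open CategoryTheory

universe w v u

/-- An `Ord`-enrichment of a category: a preorder on each hom-set,
preserved by composition on both sides. -/
class OrdEnrichment (C : Type u) [Category.{v} C] : Type (max u v) where
  ord : ∀ {X Y : C}, (X ⟶ Y) → (X ⟶ Y) → Prop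
  ord_refl : ∀ {X Y : C} (f : X ⟶ Y), ord f f
  ord_trans : ∀ {X Y : C} {f g h : X ⟶ Y}, ord f g → ord g h → ord f h
  precomp_ord : ∀ {X Y Z : C} (e : X ⟶ Y) {f g : Y ⟶ Z}, ord f g → ord (e ≫ f) (e ≫ g)
  postcomp_ord : ∀ {X Y Z : C} {f g : X ⟶ Y} (h : Y ⟶ Z), ord f g → ord (f ≫ h) (g ≫ h)

/-- The preorder on hom-sets of an `Ord`-category. -/
def homLe {C : Type u} [Category.{v} C] [OrdEnrichment C] {X Y : C} (f g : X ⟶ Y) : Prop :=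
  OrdEnrichment.ord f g

infixl:50 " ≼ " => homLe

section

variable {C : Type u} [Category.{v} C] [OrdEnrichment C]

/-- A full (ff-) morphism. -/
def IsFF {X Y : C} (m : X ⟶ Y) : Prop :=
  ∀ {A : C} (a a' : A ⟶ X), (a ≫ m) ≼ (a' ≫ m) → a ≼ a'

/-- An ff-monomorphism: a full monomorphism. -/
def IsFFMono {X Y : C} (m : X ⟶ Y) : Prop := IsFF m ∧ Mono m

/-- An so-morphism: a morphism left orthogonal to every ff-monomorphism. -/
def IsSO {A B : C} (e : A ⟶ B) : Prop :=
  ∀ {X Y : C} (m : X ⟶ Y), IsFFMono m → ∀ (u : A ⟶ X) (v : B ⟶ Y),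
    u ≫ m = e ≫ v → ∃ d : B ⟶ X, e ≫ d = u ∧ d ≫ m = v

/-- The (strict) comma object square for the ordered pair `(f, g)`. -/
structure IsCommaSq {X Y Z : C} (f : X ⟶ Y) (g : Z ⟶ Y) (P : C)
    (π₁ : P ⟶ X) (π₂ : P ⟶ Z) : Prop where
  le : (π₁ ≫ f) ≼ (π₂ ≫ g)
  lift : ∀ {A : C} (α : A ⟶ X) (β : A ⟶ Z), (α ≫ f) ≼ (β ≫ g) →
    ∃! h : A ⟶ P, h ≫ π₁ = α ∧ h ≫ π₂ = β
  lift_ord : ∀ {A : C} {h h' : A ⟶ P}, (h ≫ π₁) ≼ (h' ≫ π₁) → (h ≫ π₂) ≼ (h' ≫ π₂) → h ≼ h'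

/-- A 2-pullback square (pullback with the `Ord`-enriched universal property). -/
structure Is2Pullback {X Y Z : C} (f : X ⟶ Z) (g : Y ⟶ Z) (P : C)
    (p : P ⟶ X) (q : P ⟶ Y) : Prop where
  comm : p ≫ f = q ≫ g
  lift : ∀ {A : C} (a : A ⟶ X) (b : A ⟶ Y), a ≫ f = b ≫ g →
    ∃! h : A ⟶ P, h ≫ p = a ∧ h ≫ q = b
  lift_ord : ∀ {A : C} {h h' : A ⟶ P}, (h ≫ p) ≼ (h' ≫ p) → (h ≫ q) ≼ (h' ≫ q) → h ≼ h'

/-- A binary 2-product. -/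
structure Is2Product (X Y : C) (P : C) (p : P ⟶ X) (q : P ⟶ Y) : Prop where
  lift : ∀ {A : C} (a : A ⟶ X) (b : A ⟶ Y), ∃! h : A ⟶ P, h ≫ p = a ∧ h ≫ q = b
  lift_ord : ∀ {A : C} {h h' : A ⟶ P}, (h ≫ p) ≼ (h' ≫ p) → (h ≫ q) ≼ (h' ≫ q) → h ≼ h'

/-- A 2-equalizer. -/
structure Is2Equalizer {X Y : C} (f g : X ⟶ Y) (E : C) (i : E ⟶ X) : Prop where
  comm : i ≫ f = i ≫ g
  lift : ∀ {A : C} (a : A ⟶ X), a ≫ f = a ≫ g → ∃! h : A ⟶ E, h ≫ i = a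
  lift_ord : ∀ {A : C} {h h' : A ⟶ E}, (h ≫ i) ≼ (h' ≫ i) → h ≼ h'

/-- A bicoinserter of a parallel pair. -/
structure IsBicoinserter {X A E : C} (a b : X ⟶ A) (e : A ⟶ E) : Prop where
  le : (a ≫ e) ≼ (b ≫ e)
  desc : ∀ {F : C} (f : A ⟶ F), (a ≫ f) ≼ (b ≫ f) →
    ∃ t : E ⟶ F, (e ≫ t) ≼ f ∧ f ≼ (e ≫ t)
  desc_ord : ∀ {F : C} {f f' : A ⟶ F} {t t' : E ⟶ F},
    (e ≫ t) ≼ f → f ≼ (e ≫ t) → (e ≫ t') ≼ f' → f' ≼ (e ≫ t') → f ≼ f' → t ≼ t'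

/-- A relation from `X` to `Y` in an `Ord`-category: a jointly ff-monomorphic span. -/
structure RelStr (X Y : C) : Type (max u v) where
  obj : C
  p : obj ⟶ X
  q : obj ⟶ Y
  jointly_ff : ∀ {A : C} (a a' : A ⟶ obj), (a ≫ p) ≼ (a' ≫ p) → (a ≫ q) ≼ (a' ≫ q) → a ≼ a'
  jointly_mono : ∀ {A : C} (a a' : A ⟶ obj), a ≫ p = a' ≫ p → a ≫ q = a' ≫ q → a = a'

/-- `(x, y) ∈_A R`. -/
def RelStr.Mem {X Y : C} (R : RelStr X Y) {A : C} (x : A ⟶ X) (y : A ⟶ Y) : Prop :=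
  ∃ h : A ⟶ R.obj, h ≫ R.p = x ∧ h ≫ R.q = y

/-- `R ⊆ S`: `R` factors through `S` (over `X × Y`). -/
def RelStr.Sub {X Y : C} (R S : RelStr X Y) : Prop :=
  ∃ φ : R.obj ⟶ S.obj, φ ≫ S.p = R.p ∧ φ ≫ S.q = R.q

/-- `R ≅ S`: mutual factorisation. -/
def RelStr.Iso {X Y : C} (R S : RelStr X Y) : Prop := R.Sub S ∧ S.Sub R

/-- The opposite relation `R°`. -/
def RelStr.op {X Y : C} (R : RelStr X Y) : RelStr Y X where
  obj := R.obj
  p := R.q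
  q := R.p
  jointly_ff := fun a a' h1 h2 => R.jointly_ff a a' h2 h1
  jointly_mono := fun a a' h1 h2 => R.jointly_mono a a' h2 h1

/-- A relation is an (order) ideal when it is closed under lowering the first
coordinate and raising the second coordinate. -/
def IsIdealRel {X Y : C} (R : RelStr X Y) : Prop :=
  ∀ {A : C} (x x' : A ⟶ X) (y y' : A ⟶ Y), x' ≼ x → R.Mem x y → y ≼ y' → R.Mem x' y'

/-- The relation `f_♯` given by the span `(1_X, f)`. -/
def sharpRel {X Y : C} (f : X ⟶ Y) : RelStr X Y where
  obj := X
  p := 𝟙 X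
  q := f
  jointly_ff := fun a a' h1 _ => by simpa using h1
  jointly_mono := fun a a' h1 _ => by simpa using h1

/-- The relation `f°`, the opposite of `f_♯`. -/
def cosharpRel {X Y : C} (f : X ⟶ Y) : RelStr Y X := (sharpRel f).op

/-- `M` is the meet (intersection) `R ∧ S` of two relations. -/
def IsMeetRel {X Y : C} (R S M : RelStr X Y) : Prop :=
  M.Sub R ∧ M.Sub S ∧
    ∀ {A : C} (x : A ⟶ X) (y : A ⟶ Y), R.Mem x y → S.Mem x y → M.Mem x y

/-- `T` is the composite `S ∘ R` of the relations `R : X ↬ Y` and `S : Y ↬ Z`,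
obtained via the (so-morphism, ff-monomorphism) factorisation of the span
given by the 2-pullback over the middle object. -/
def IsCompositeRel {X Y Z : C} (R : RelStr X Y) (S : RelStr Y Z) (T : RelStr X Z) : Prop :=
  ∃ (P : C) (p₁ : P ⟶ R.obj) (p₂ : P ⟶ S.obj) (e : P ⟶ T.obj),
    Is2Pullback R.q S.p P p₁ p₂ ∧ IsSO e ∧ e ≫ T.p = p₁ ≫ R.p ∧ e ≫ T.q = p₂ ≫ S.q

/-- `R` is the ideal `f_* = f / 1_Y : X ↬ Y`. -/
def IsStarRel {X Y : C} (f : X ⟶ Y) (R : RelStr X Y) : Prop :=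
  IsCommaSq f (𝟙 Y) R.obj R.p R.q

/-- `R` is the ideal `f^* = 1_Y / f : Y ↬ X`. -/
def IsCostarRel {X Y : C} (f : X ⟶ Y) (R : RelStr Y X) : Prop :=
  IsCommaSq (𝟙 Y) f R.obj R.p R.q

/-- `R` is the identity ideal `I_X = 1_X / 1_X`. -/
def IsIdRel (X : C) (R : RelStr X X) : Prop :=
  IsCommaSq (𝟙 X) (𝟙 X) R.obj R.p R.q

/-- `S` is the 2-pullback of the relation `R ↣ X × Y` along `f × g`. -/
def IsRelPullback {X Y U V : C} (R : RelStr X Y) (f : U ⟶ X) (g : V ⟶ Y)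
    (S : RelStr U V) : Prop :=
  ∃ h : S.obj ⟶ R.obj, h ≫ R.p = S.p ≫ f ∧ h ≫ R.q = S.q ≫ g ∧
    ∀ {A : C} (a : A ⟶ U) (b : A ⟶ V) (c : A ⟶ R.obj),
      c ≫ R.p = a ≫ f → c ≫ R.q = b ≫ g →
      ∃ d : A ⟶ S.obj, d ≫ S.p = a ∧ d ≫ S.q = b ∧ d ≫ h = c

/-- A binary 2-coproduct. -/
structure Is2Coproduct (X Y : C) (P : C) (i : X ⟶ P) (j : Y ⟶ P) : Prop where
  desc : ∀ {A : C} (a : X ⟶ A) (b : Y ⟶ A), ∃! h : P ⟶ A, i ≫ h = a ∧ j ≫ h = b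
  desc_ord : ∀ {A : C} {h h' : P ⟶ A}, (i ≫ h) ≼ (i ≫ h') → (j ≫ h) ≼ (j ≫ h') → h ≼ h'

/-- A ternary 2-coproduct. -/
structure Is3Coproduct (X Y Z : C) (P : C) (i : X ⟶ P) (j : Y ⟶ P) (k : Z ⟶ P) : Prop where
  desc : ∀ {A : C} (a : X ⟶ A) (b : Y ⟶ A) (c : Z ⟶ A),
    ∃! h : P ⟶ A, i ≫ h = a ∧ j ≫ h = b ∧ k ≫ h = c
  desc_ord : ∀ {A : C} {h h' : P ⟶ A},
    (i ≫ h) ≼ (i ≫ h') → (j ≫ h) ≼ (j ≫ h') → (k ≫ h) ≼ (k ≫ h') → h ≼ h'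

/-- Reflexivity of a relation on `X`: the diagonal factors through it. -/
def ReflexiveRel {X : C} (R : RelStr X X) : Prop := R.Mem (𝟙 X) (𝟙 X)

/-- Transitivity of a relation on `X`: `R ∘ R ⊆ R`. -/
def TransitiveRel {X : C} (R : RelStr X X) : Prop :=
  ∀ T : RelStr X X, IsCompositeRel R R T → T.Sub R

/-- A congruence: a reflexive and transitive ideal. -/
def IsCongruence {X : C} (R : RelStr X X) : Prop :=
  IsIdealRel R ∧ ReflexiveRel R ∧ TransitiveRel R

/-- An effective congruence: `R ≅ f^* ∘ f_*` for some morphism `f`. -/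
def EffectiveCongruence {X : C} (R : RelStr X X) : Prop :=
  ∃ (Y : C) (f : X ⟶ Y) (Fstar : RelStr X Y) (Fco : RelStr Y X) (T : RelStr X X),
    IsStarRel f Fstar ∧ IsCostarRel f Fco ∧ IsCompositeRel Fstar Fco T ∧ R.Iso T

/-- The `Ord`-enriched difunctionality property of a relation. -/
def OrdDifunctional {X Y : C} (D : RelStr X Y) : Prop :=
  ∀ {A : C} (x u u' : A ⟶ X) (y y' v : A ⟶ Y),
    D.Mem x y → y ≼ y' → D.Mem u y' → u ≼ u' → D.Mem u' v → D.Mem x v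

end

/-- A regular `Ord`-category: finite weighted limits, an
(so-morphism, ff-monomorphism) factorisation system, so-morphisms stable under
2-pullbacks, and every so-morphism the bicoinserter of its comma object projections. -/
structure IsRegularOrd (C : Type u) [Category.{v} C] [OrdEnrichment C] : Prop where
  hasTerminal : ∃ T : C, ∀ A : C, ∃ f : A ⟶ T, ∀ g : A ⟶ T, g = f
  has2Products : ∀ X Y : C, ∃ (P : C) (p : P ⟶ X) (q : P ⟶ Y), Is2Product X Y P p q
  has2Equalizers : ∀ {X Y : C} (f g : X ⟶ Y), ∃ (E : C) (i : E ⟶ X), Is2Equalizer f g E i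
  has2Pullbacks : ∀ {X Y Z : C} (f : X ⟶ Z) (g : Y ⟶ Z),
    ∃ (P : C) (p : P ⟶ X) (q : P ⟶ Y), Is2Pullback f g P p q
  hasCommaObjects : ∀ {X Y Z : C} (f : X ⟶ Y) (g : Z ⟶ Y),
    ∃ (P : C) (p : P ⟶ X) (q : P ⟶ Z), IsCommaSq f g P p q
  fact : ∀ {X Y : C} (f : X ⟶ Y), ∃ (I : C) (e : X ⟶ I) (m : I ⟶ Y),
    IsSO e ∧ IsFFMono m ∧ e ≫ m = f
  so_pullback_stable : ∀ {X Y Z P : C} (f : X ⟶ Z) (g : Y ⟶ Z) (p : P ⟶ X) (q : P ⟶ Y),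
    Is2Pullback f g P p q → IsSO g → IsSO p
  so_bicoinserter : ∀ {A B P : C} (e : A ⟶ B), IsSO e →
    ∀ (π₁ π₂ : P ⟶ A), IsCommaSq e e P π₁ π₂ → IsBicoinserter π₁ π₂ e

/-- An `Ord`-Mal'tsev category: every ideal is `Ord`-difunctional. -/
def IsOrdMaltsev (C : Type u) [Category.{v} C] [OrdEnrichment C] : Prop :=
  ∀ (X Y : C) (D : RelStr X Y), IsIdealRel D → OrdDifunctional D

/-- An `Ord`-W-Mal'tsev object: every ideal is `Ord`-difunctional with respect to
generalised elements with domain `Y`. -/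
def IsOrdWMaltsevObj {C : Type u} [Category.{v} C] [OrdEnrichment C] (Y : C) : Prop :=
  ∀ (X Z : C) (R : RelStr X Z), IsIdealRel R →
    ∀ (x u u' : Y ⟶ X) (z z' v : Y ⟶ Z),
      R.Mem x z → z ≼ z' → R.Mem u z' → u ≼ u' → R.Mem u' v → R.Mem x v


/-!
Relations are handled through generalised elements. By orthogonality, membership in a relation
descends along so-morphisms, and by stability under 2-pullbacks every element of a composite
becomes, after precomposition with an so-morphism, a composable pair of elements. Hence
`D ∘ E ∘ D ⊆ D` can be tested on chains of elements. For `E = D^*`, whose elements `(y, u')` are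
locally those with `y ≼ y'`, `(u, y') ∈ D` and `u ≼ u'`, the test is `Ord`-difunctionality. For
`E = D°` it is plain difunctionality, and an ideal `D` absorbs the two missing inequalities into
the outer memberships. In both cases `D° ⊆ E`, which gives `D ⊆ D ∘ E ∘ D` for free.
-/

section

variable {C : Type u} [Category.{v} C] [OrdEnrichment C] {A B P X Y Z : C}

theorem homLe.refl (f : X ⟶ Y) : f ≼ f :=
  OrdEnrichment.ord_refl f

theorem homLe.precomp {f g : Y ⟶ Z} (h : f ≼ g) (e : X ⟶ Y) : (e ≫ f) ≼ (e ≫ g) :=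
  OrdEnrichment.precomp_ord e h

theorem homLe.postcomp {f g : X ⟶ Y} (h : f ≼ g) (k : Y ⟶ Z) : (f ≫ k) ≼ (g ≫ k) :=
  OrdEnrichment.postcomp_ord k h

theorem Is2Product.hom_ext {p : P ⟶ X} {q : P ⟶ Y} (hP : Is2Product X Y P p q) {f g : A ⟶ P}
    (hp : f ≫ p = g ≫ p) (hq : f ≫ q = g ≫ q) : f = g :=
  (hP.lift (g ≫ p) (g ≫ q)).unique ⟨hp, hq⟩ ⟨rfl, rfl⟩

theorem IsCommaSq.exists_lift_iff {f : X ⟶ Y} {g : Z ⟶ Y} {π₁ : P ⟶ X} {π₂ : P ⟶ Z}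
    (hP : IsCommaSq f g P π₁ π₂) {a : A ⟶ X} {b : A ⟶ Z} :
    (∃ h : A ⟶ P, h ≫ π₁ = a ∧ h ≫ π₂ = b) ↔ (a ≫ f) ≼ (b ≫ g) := by
  refine ⟨?_, fun h => (hP.lift a b h).exists⟩
  rintro ⟨h, rfl, rfl⟩
  simpa only [Category.assoc] using hP.le.precomp h

namespace RelStr

theorem mem_self (R : RelStr X Y) : R.Mem R.p R.q :=
  ⟨𝟙 _, Category.id_comp _, Category.id_comp _⟩

theorem Mem.precomp {R : RelStr X Y} {x : A ⟶ X} {y : A ⟶ Y} (h : R.Mem x y) (e : B ⟶ A) :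
    R.Mem (e ≫ x) (e ≫ y) := by
  obtain ⟨k, rfl, rfl⟩ := h
  exact ⟨e ≫ k, Category.assoc _ _ _, Category.assoc _ _ _⟩

theorem mem_op_iff {R : RelStr X Y} {x : A ⟶ X} {y : A ⟶ Y} : R.op.Mem y x ↔ R.Mem x y :=
  exists_congr fun _ => and_comm

theorem sub_iff_mem {R S : RelStr X Y} : R.Sub S ↔ S.Mem R.p R.q :=
  Iff.rfl

theorem Sub.mem {R S : RelStr X Y} (h : R.Sub S) {x : A ⟶ X} {y : A ⟶ Y} (hR : R.Mem x y) :
    S.Mem x y := by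
  obtain ⟨k, rfl, rfl⟩ := hR
  exact (sub_iff_mem.1 h).precomp k

theorem isFFMono_of_comp_eq (R : RelStr X Y) {m : R.obj ⟶ P} {p : P ⟶ X} {q : P ⟶ Y}
    (hp : m ≫ p = R.p) (hq : m ≫ q = R.q) : IsFFMono m := by
  refine ⟨fun a a' h => R.jointly_ff a a' ?_ ?_, ⟨fun a a' h => R.jointly_mono a a' ?_ ?_⟩⟩
  · simpa only [Category.assoc, hp] using h.postcomp p
  · simpa only [Category.assoc, hq] using h.postcomp q
  · simpa only [Category.assoc, hp] using congrArg (· ≫ p) h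
  · simpa only [Category.assoc, hq] using congrArg (· ≫ q) h

end RelStr

theorem IsSO.mem_of_precomp_mem {p : P ⟶ X} {q : P ⟶ Y} (hP : Is2Product X Y P p q)
    {R : RelStr X Y} {e : B ⟶ A} (he : IsSO e) {x : A ⟶ X} {y : A ⟶ Y}
    (h : R.Mem (e ≫ x) (e ≫ y)) : R.Mem x y := by
  obtain ⟨k, hkx, hky⟩ := h
  obtain ⟨m, hmp, hmq⟩ := (hP.lift R.p R.q).exists
  obtain ⟨w, rfl, rfl⟩ := (hP.lift x y).exists
  have square : k ≫ m = e ≫ w :=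
    hP.hom_ext (by simp only [Category.assoc, hmp, hkx]) (by simp only [Category.assoc, hmq, hky])
  obtain ⟨d, -, rfl⟩ := he m (R.isFFMono_of_comp_eq hmp hmq) k w square
  exact ⟨d, by rw [Category.assoc, hmp], by rw [Category.assoc, hmq]⟩

theorem IsStarRel.mem_iff {f : X ⟶ Y} {R : RelStr X Y} (hR : IsStarRel f R) {x : A ⟶ X}
    {y : A ⟶ Y} : R.Mem x y ↔ (x ≫ f) ≼ y := by
  simpa only [RelStr.Mem, Category.comp_id] using IsCommaSq.exists_lift_iff hR (a := x) (b := y)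

theorem IsCostarRel.mem_iff {f : X ⟶ Y} {R : RelStr Y X} (hR : IsCostarRel f R) {x : A ⟶ X}
    {y : A ⟶ Y} : R.Mem y x ↔ y ≼ (x ≫ f) := by
  simpa only [RelStr.Mem, Category.comp_id] using IsCommaSq.exists_lift_iff hR (a := y) (b := x)

variable (C) in
/-- The part of regularity that makes composition of relations computable on generalised
elements: binary 2-products, 2-pullbacks, and so-morphisms stable under 2-pullbacks. -/
structure HasStableSO : Prop where
  has2Products : ∀ X Y : C, ∃ (P : C) (p : P ⟶ X) (q : P ⟶ Y), Is2Product X Y P p q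
  has2Pullbacks : ∀ {X Y Z : C} (f : X ⟶ Z) (g : Y ⟶ Z),
    ∃ (P : C) (p : P ⟶ X) (q : P ⟶ Y), Is2Pullback f g P p q
  so_pullback_stable : ∀ {X Y Z P : C} (f : X ⟶ Z) (g : Y ⟶ Z) (p : P ⟶ X) (q : P ⟶ Y),
    Is2Pullback f g P p q → IsSO g → IsSO p

theorem IsRegularOrd.hasStableSO (hC : IsRegularOrd C) : HasStableSO C :=
  ⟨hC.has2Products, hC.has2Pullbacks, hC.so_pullback_stable⟩

namespace IsCompositeRel

variable {R : RelStr X Y} {S : RelStr Y Z} {T : RelStr X Z}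

theorem mem (hT : IsCompositeRel R S T) {x : A ⟶ X} {y : A ⟶ Y} {z : A ⟶ Z}
    (hR : R.Mem x y) (hS : S.Mem y z) : T.Mem x z := by
  obtain ⟨P, p₁, p₂, e, hP, -, hp, hq⟩ := hT
  obtain ⟨r, rfl, hr⟩ := hR
  obtain ⟨s, hs, rfl⟩ := hS
  obtain ⟨k, rfl, rfl⟩ := (hP.lift r s (hr.trans hs.symm)).exists
  exact ⟨k ≫ e, by simp only [Category.assoc, hp], by simp only [Category.assoc, hq]⟩

theorem exists_so_of_mem (hC : HasStableSO C) (hT : IsCompositeRel R S T) {x : A ⟶ X} {z : A ⟶ Z}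
    (h : T.Mem x z) :
    ∃ (B : C) (e : B ⟶ A) (y : B ⟶ Y), IsSO e ∧ R.Mem (e ≫ x) y ∧ S.Mem y (e ≫ z) := by
  obtain ⟨P, p₁, p₂, c, hP, hc, hp, hq⟩ := hT
  obtain ⟨t, rfl, rfl⟩ := h
  obtain ⟨B, e, g, hB⟩ := hC.has2Pullbacks t c
  refine ⟨B, e, g ≫ p₁ ≫ R.q, hC.so_pullback_stable _ _ _ _ hB hc,
    ⟨g ≫ p₁, ?_, Category.assoc _ _ _⟩, ⟨g ≫ p₂, ?_, ?_⟩⟩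
  · rw [← Category.assoc e, hB.comm, Category.assoc, Category.assoc, hp]
  · rw [hP.comm, Category.assoc]
  · rw [← Category.assoc e, hB.comm, Category.assoc, Category.assoc, hq]

end IsCompositeRel

/-- Difunctionality of `D` with `E` in the role of `D°`: the elementwise form of
`D ∘ E ∘ D ⊆ D`. -/
def RelStr.DifunctionalVia (D : RelStr X Y) (E : RelStr Y X) : Prop :=
  ∀ {A : C} {x u : A ⟶ X} {y v : A ⟶ Y}, D.Mem x y → E.Mem y u → D.Mem u v → D.Mem x v

namespace RelStr

variable {D T : RelStr X Y} {E : RelStr Y X} {S : RelStr X X}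

theorem difunctionalVia_iff_sub (hC : HasStableSO C) (hS : IsCompositeRel D E S)
    (hT : IsCompositeRel S D T) : D.DifunctionalVia E ↔ T.Sub D := by
  refine ⟨fun hD => ?_, fun hTD _ _ _ _ _ hxy hyu huv => hTD.mem (hT.mem (hS.mem hxy hyu) huv)⟩
  obtain ⟨_, _, _, hProd⟩ := hC.has2Products X Y
  obtain ⟨_, e, _, he, hS_mem, huv⟩ := hT.exists_so_of_mem hC T.mem_self
  obtain ⟨_, e', _, he', hxy, hyu⟩ := hS.exists_so_of_mem hC hS_mem
  exact he.mem_of_precomp_mem hProd (he'.mem_of_precomp_mem hProd (hD hxy hyu (huv.precomp e')))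

theorem sub_comp_comp_of_op_sub (hE : D.op.Sub E) (hS : IsCompositeRel D E S)
    (hT : IsCompositeRel S D T) : D.Sub T :=
  sub_iff_mem.2 (hT.mem (hS.mem D.mem_self (sub_iff_mem.1 hE)) D.mem_self)

theorem difunctionalVia_iff_iso (hC : HasStableSO C) (hE : D.op.Sub E)
    (hS : IsCompositeRel D E S) (hT : IsCompositeRel S D T) :
    D.DifunctionalVia E ↔ D.Iso T :=
  (difunctionalVia_iff_sub hC hS hT).trans
    (and_iff_right (sub_comp_comp_of_op_sub hE hS hT)).symm

end RelStr

/-- `E` is the ideal `D^* = (d₁)_* ∘ (d₂)^*`. -/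
def IsUpperStarRel (D : RelStr X Y) (E : RelStr Y X) : Prop :=
  ∃ (S : RelStr D.obj X) (T : RelStr Y D.obj),
    IsStarRel D.p S ∧ IsCostarRel D.q T ∧ IsCompositeRel T S E

namespace IsUpperStarRel

variable {D : RelStr X Y} {E : RelStr Y X}

theorem mem (hE : IsUpperStarRel D E) {u u' : A ⟶ X} {y y' : A ⟶ Y}
    (hy : y ≼ y') (huy : D.Mem u y') (hu : u ≼ u') : E.Mem y u' := by
  obtain ⟨S, T, hS, hT, hE⟩ := hE
  obtain ⟨d, rfl, rfl⟩ := huy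
  exact hE.mem (hT.mem_iff.2 hy) (hS.mem_iff.2 hu)

theorem exists_so_of_mem (hC : HasStableSO C) (hE : IsUpperStarRel D E) {y : A ⟶ Y}
    {u' : A ⟶ X} (h : E.Mem y u') :
    ∃ (B : C) (e : B ⟶ A) (u : B ⟶ X) (y' : B ⟶ Y),
      IsSO e ∧ (e ≫ y) ≼ y' ∧ D.Mem u y' ∧ u ≼ (e ≫ u') := by
  obtain ⟨S, T, hS, hT, hE⟩ := hE
  obtain ⟨B, e, d, he, hy, hu⟩ := hE.exists_so_of_mem hC h
  exact ⟨B, e, d ≫ D.p, d ≫ D.q, he, hT.mem_iff.1 hy, D.mem_self.precomp d, hS.mem_iff.1 hu⟩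

theorem op_sub (hE : IsUpperStarRel D E) : D.op.Sub E :=
  RelStr.sub_iff_mem.2 (hE.mem (homLe.refl _) D.mem_self (homLe.refl _))

end IsUpperStarRel

theorem ordDifunctional_iff_difunctionalVia_upperStar (hC : HasStableSO C) {D : RelStr X Y}
    {E : RelStr Y X} (hE : IsUpperStarRel D E) : OrdDifunctional D ↔ D.DifunctionalVia E := by
  constructor
  · intro hD _ _ _ _ _ hxy hyu huv
    obtain ⟨_, _, _, hProd⟩ := hC.has2Products X Y
    obtain ⟨_, e, _, _, he, hy, hu'y', hu'⟩ := hE.exists_so_of_mem hC hyu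
    exact he.mem_of_precomp_mem hProd
      (hD _ _ _ _ _ _ (hxy.precomp e) hy hu'y' hu' (huv.precomp e))
  · intro hD _ _ _ _ _ _ _ hxy hy huy' hu huv
    exact hD hxy (hE.mem hy huy' hu) huv

theorem IsIdealRel.ordDifunctional_iff_difunctionalVia_op {D : RelStr X Y} (hD : IsIdealRel D) :
    OrdDifunctional D ↔ D.DifunctionalVia D.op := by
  constructor
  · intro h _ _ _ _ _ hxy hyu huv
    exact h _ _ _ _ _ _ hxy (homLe.refl _) (RelStr.mem_op_iff.1 hyu) (homLe.refl _) huv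
  · intro h _ x u u' y y' v hxy hy huy' hu hu'v
    have hxy' : D.Mem x y' := hD _ _ _ _ (homLe.refl x) hxy hy
    have huv : D.Mem u v := hD _ _ _ _ hu hu'v (homLe.refl v)
    exact h hxy' (RelStr.mem_op_iff.2 huy') huv

theorem statement13_general (hC : HasStableSO C) {D : RelStr X Y} {E : RelStr Y X}
    (hE : IsUpperStarRel D E)
    {U1 : RelStr X X} (hU1 : IsCompositeRel D E U1)
    {U2 : RelStr X Y} (hU2 : IsCompositeRel U1 D U2)
    {V1 : RelStr X X} (hV1 : IsCompositeRel D D.op V1)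
    {V2 : RelStr X Y} (hV2 : IsCompositeRel V1 D V2) :
    (OrdDifunctional D ↔ D.Iso U2) ∧ (IsIdealRel D → (OrdDifunctional D ↔ D.Iso V2)) :=
  ⟨(ordDifunctional_iff_difunctionalVia_upperStar hC hE).trans
      (RelStr.difunctionalVia_iff_iso hC hE.op_sub hU1 hU2),
    fun hD => hD.ordDifunctional_iff_difunctionalVia_op.trans
      (RelStr.difunctionalVia_iff_iso hC D.op.mem_self hV1 hV2)⟩

end

/-- An ideal `D` is `Ord`-difunctional iff `D ≅ D ∘ D^* ∘ D`, equivalently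
`D ≅ D ∘ D° ∘ D`. -/
theorem statement13 {C : Type u} [Category.{v} C] [OrdEnrichment C] (hC : IsRegularOrd C)
    {X Y : C} (D : RelStr X Y) (hD : IsIdealRel D)
    -- `D^* = (d₁)_* ∘ (d₂)^*`
    (D1star : RelStr D.obj X) (hD1star : IsStarRel D.p D1star)
    (D2co : RelStr Y D.obj) (hD2co : IsCostarRel D.q D2co)
    (Dupper : RelStr Y X) (hDupper : IsCompositeRel D2co D1star Dupper)
    -- `D ∘ D^* ∘ D`
    (U1 : RelStr X X) (hU1 : IsCompositeRel D Dupper U1)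
    (U2 : RelStr X Y) (hU2 : IsCompositeRel U1 D U2)
    -- `D ∘ D° ∘ D`
    (V1 : RelStr X X) (hV1 : IsCompositeRel D D.op V1)
    (V2 : RelStr X Y) (hV2 : IsCompositeRel V1 D V2) :
    (OrdDifunctional D ↔ D.Iso U2) ∧ (OrdDifunctional D ↔ D.Iso V2) := by
  obtain ⟨hU, hV⟩ := statement13_general hC.hasStableSO
    ⟨D1star, D2co, hD1star, hD2co, hDupper⟩ hU1 hU2 hV1 hV2
  exact ⟨hU, hV hD⟩
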